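/- Let G be a finite simple graph on vertex set V = {v_1,…,v_n} with a fixed orientation of its edges and graph polynomial F_G, and let τ ∈ ℤ_{≥0}^n satisfy [x^τ]F_G ≠ 0. Define A_1 = {i : 2τ_i ≤ deg_G(v_i) − 2} and B_1 = {i : 2τ_i ≥ deg_G(v_i) + 2}. Choose any A_3 ⊆ A_1 with |A_3| = max(0, |A_1| − |B_1|) and any B_3 ⊆ B_1 with |B_3| = max(0, |B_1| − |A_1|). Define f : V → ℤ by f(v_i) = max(τ_i, deg_G(v_i) − τ_i) + 1 if i ∈ (A_1 ∪ B_1) \ (A_3 ∪ B_3), and f(v_i) = max(τ_i, deg_G(v_i) − τ_i) + 2 otherwise. Then for every integer k ≥ 2 the graph G □ C_{2k} is f-choosable in the following sense: for every assignment of lists A_{(v,u)} ⊆ ℝ with |A_{(v,u)}| ≥ f(v) for each vertex (v,u) of G □ C_{2k}, there exists a proper coloring of G □ C_{2k} choosing each vertex's color from its list. -/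

import Mathlib

/-!
By the Combinatorial Nullstellensatz it suffices to find a monomial `x^t` with nonzero coefficient
in the graph polynomial of `G □ C_{2k}` such that `t (v, u) < f v`. The exponents are taken to be
`te` on even layers and `deg + 2 - te` on odd layers, where `te = τ + 2` on `A₁`, `te = τ` on `B₁`
and `te = τ + 1` elsewhere.

Choosing an endpoint of each cycle edge gives a Boolean state `s_u : V → Bool` for the edges between
the layers `u - 1` and `u`. The coefficient then factors over layers for every choice of states, so
it equals the trace of a product of `2k` transfer matrices (`trace_seqProd`, `cycle_expand`,
`coeff_prod_rename`), namely `tr ((T T')^k)`, with `T` and `T'` the matrices of an even and an odd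
layer.
Reversing all edges of `G` shows `[x^d] F_G = ± [x^(deg - d)] F_G`, and since the exponents on even
and odd layers add up to `deg + 2` this yields `T' = ± Tᵀ` (`transfer_reflect`). Hence the
coefficient is `± tr ((T Tᵀ)^k)`, the trace of a power of a positive semidefinite matrix, which is
nonzero as soon as `T ≠ 0`. Finally `T` has `± [x^τ] F_G ≠ 0` among its entries
(`transfer_ne_zero`).
-/

open MvPolynomial Finset

/-- An orientation of a simple graph: a finite set of ordered pairs containing,
for each edge `{u, v}` of `G`, exactly one of `(u, v)` and `(v, u)`. -/
structure GraphOrientation {V : Type*} (G : SimpleGraph V) where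
  edges : Finset (V × V)
  adj_of_mem : ∀ e ∈ edges, G.Adj e.1 e.2
  mem_iff_not_swap_mem : ∀ u v : V, G.Adj u v → ((u, v) ∈ edges ↔ (v, u) ∉ edges)

/-- The graph polynomial `∏_{(i,j) ∈ E} (x_j - x_i)` associated to an orientation. -/
noncomputable def graphPoly {V : Type*} {G : SimpleGraph V} (D : GraphOrientation G) :
    MvPolynomial V ℝ :=
  ∏ e ∈ D.edges, (X e.2 - X e.1)

/-- The outdegree of a vertex in an orientation. -/
def GraphOrientation.outDeg {V : Type*} [DecidableEq V] {G : SimpleGraph V}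
    (D : GraphOrientation G) (v : V) : ℕ :=
  (D.edges.filter fun e => e.1 = v).card

/-- `G` is `f`-choosable: any assignment of lists of real colors with `|A_v| ≥ f v`
admits a proper coloring from the lists. -/
def Choosable {V : Type*} (G : SimpleGraph V) (f : V → ℕ) : Prop :=
  ∀ A : V → Finset ℝ, (∀ v, f v ≤ (A v).card) →
    ∃ c : V → ℝ, (∀ v, c v ∈ A v) ∧ ∀ u v : V, G.Adj u v → c u ≠ c v

/-- The list chromatic number. -/
noncomputable def chNumber {V : Type*} (G : SimpleGraph V) : ℕ :=
  sInf {m | Choosable G fun _ => m}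

/-- The Alon–Tarsi number: the least `k` such that the graph polynomial has a
monomial `x^d` with nonzero coefficient and `max_v d_v = k - 1`. -/
noncomputable def ATNumber {V : Type*} (G : SimpleGraph V) : ℕ :=
  sInf {k | ∃ (D : GraphOrientation G) (d : V →₀ ℕ),
    MvPolynomial.coeff d (graphPoly D) ≠ 0 ∧ d.support.sup d + 1 = k}

instance {α β : Type*} {G : SimpleGraph α} {H : SimpleGraph β}
    [DecidableEq α] [DecidableEq β] [DecidableRel G.Adj] [DecidableRel H.Adj] :
    DecidableRel (G.boxProd H).Adj :=
  fun _ _ => decidable_of_iff _ SimpleGraph.boxProd_adj.symm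

/-! ### Coefficients in disjoint variables -/

/-- Coefficient extraction from a product of polynomials in disjoint blocks of variables. -/
theorem coeff_prod_rename {V U : Type*} [Fintype V] [Fintype U] [DecidableEq V] [DecidableEq U]
    (p : U → MvPolynomial V ℝ) (t : V × U →₀ ℕ) (d : U → V →₀ ℕ)
    (h : ∀ v u, t (v, u) = d u v) :
    coeff t (∏ u, rename (fun v => (v, u)) (p u)) = ∏ u, coeff (d u) (p u) := by
  have h1 : ∀ u, rename (fun v => (v, u)) (p u) = ∑ m ∈ (p u).support,
      monomial (m.mapDomain fun v => (v, u)) (coeff m (p u)) := by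
    intro u
    conv_lhs => rw [(p u).as_sum]
    rw [map_sum]
    simp [rename_monomial]
  simp_rw [h1]
  have hmon : ∀ x : U → V →₀ ℕ,
      (∏ u, monomial ((x u).mapDomain fun v => (v, u)) (coeff (x u) (p u))) =
      monomial (∑ u, (x u).mapDomain fun v => (v, u)) (∏ u, coeff (x u) (p u)) := by
    intro x
    rw [monomial_sum_prod]
  have hcond : ∀ x : U → V →₀ ℕ, (∑ u, (x u).mapDomain fun v => (v, u)) = t ↔ x = d := by
    intro x
    have happ : ∀ v u, (∑ u, (x u).mapDomain fun v => (v, u)) (v, u) = x u v := by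
      intro v u
      rw [Finsupp.finsetSum_apply, Finset.sum_eq_single u]
      · exact Finsupp.mapDomain_apply (fun a b hab => (Prod.mk.inj hab).1) _ _
      · intro u' _ hu
        apply Finsupp.mapDomain_of_notMem_range
        rintro ⟨w, hw⟩
        exact hu (Prod.mk.inj hw).2
      · simp
    constructor
    · intro hx
      funext u
      ext v
      rw [← h, ← hx, happ]
    · rintro rfl
      ext ⟨v, u⟩
      rw [happ, h]
  rw [Finset.prod_univ_sum, coeff_sum]
  simp_rw [hmon, coeff_monomial, hcond]
  rw [Finset.sum_ite_eq']
  split_ifs with hd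
  · rfl
  · simp only [Fintype.mem_piFinset, not_forall, notMem_support_iff] at hd
    obtain ⟨u, hu⟩ := hd
    exact (Finset.prod_eq_zero (Finset.mem_univ u) hu).symm

/-! ### Traces of products of matrices -/

/-- The product `A 0 * A 1 * ⋯ * A (m - 1)`. -/
def seqProd {S : Type*} [Fintype S] [DecidableEq S] (A : ℕ → Matrix S S ℝ) :
    ℕ → Matrix S S ℝ
  | 0 => 1
  | m + 1 => seqProd A m * A m

theorem seqProd_apply {S : Type*} [Fintype S] [DecidableEq S] (A : ℕ → Matrix S S ℝ)
    (m : ℕ) (a b : S) :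
    seqProd A (m + 1) a b = ∑ s : Fin m → S, ∏ u : Fin (m + 1),
      A u ((Fin.cons a s : Fin (m + 1) → S) u) ((Fin.snoc s b : Fin (m + 1) → S) u) := by
  induction m generalizing b with
  | zero => simp [seqProd, Fin.snoc]
  | succ m ih =>
    rw [seqProd, Matrix.mul_apply, ← (Fin.snocEquiv fun _ : Fin (m + 1) => S).sum_comp,
      Fintype.sum_prod_type]
    refine Finset.sum_congr rfl fun c _ => ?_
    rw [ih, Finset.sum_mul]
    refine Finset.sum_congr rfl fun s _ => ?_
    have key : (Fin.cons a ((Fin.snocEquiv fun _ : Fin (m + 1) => S) (c, s)) : Fin (m + 2) → S) =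
        Fin.snoc (Fin.cons a s : Fin (m + 1) → S) c := Fin.cons_snoc_eq_snoc_cons a s c
    rw [Fin.prod_univ_castSucc (n := m + 1), key]
    simp only [Fin.snocEquiv_apply, Fin.snoc_castSucc, Fin.snoc_last, Fin.val_castSucc,
      Fin.val_last]

/-- The trace of a product of matrices is a sum over closed walks. -/
theorem trace_seqProd {S : Type*} [Fintype S] [DecidableEq S] (A : ℕ → Matrix S S ℝ) (m : ℕ) :
    (seqProd A (m + 1)).trace =
      ∑ s : Fin (m + 1) → S, ∏ u : Fin (m + 1), A u (s u) (s (u + 1)) := by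
  rw [← (Fin.consEquiv fun _ : Fin (m + 1) => S).sum_comp, Fintype.sum_prod_type, Matrix.trace]
  refine Finset.sum_congr rfl fun a _ => ?_
  rw [Matrix.diag_apply, seqProd_apply]
  refine Finset.sum_congr rfl fun s _ => Finset.prod_congr rfl fun u _ => ?_
  simp only [Fin.consEquiv_apply]
  congr 1
  induction u using Fin.lastCases with
  | last => simp
  | cast i => simp

theorem seqProd_alternating {S : Type*} [Fintype S] [DecidableEq S] (T T' : Matrix S S ℝ)
    (k : ℕ) : seqProd (fun u => if Even u then T else T') (2 * k) = (T * T') ^ k := by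
  induction k with
  | zero => rfl
  | succ k ih =>
    rw [show 2 * (k + 1) = 2 * k + 1 + 1 by ring, seqProd, seqProd, ih, pow_succ]
    simp [Matrix.mul_assoc]

/-- The trace is nonzero since positive powers of `T * Tᴴ` are positive semidefinite and vanish only
if `T` does. -/
theorem trace_pow_ne_zero {S : Type*} [Fintype S] [DecidableEq S] (T : Matrix S S ℝ)
    (hT : T ≠ 0) (k : ℕ) : ((T * T.conjTranspose) ^ (k + 1)).trace ≠ 0 := by
  have hps : ((T * T.conjTranspose) ^ (k + 1)).PosSemidef :=
    (Matrix.posSemidef_self_mul_conjTranspose T).pow _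
  rw [Ne, hps.trace_eq_zero_iff]
  clear hps
  induction k with
  | zero => rwa [zero_add, pow_one, Matrix.self_mul_conjTranspose_eq_zero]
  | succ k ih =>
    intro h
    apply ih
    rw [pow_succ', Matrix.self_mul_conjTranspose_mul_eq_zero, pow_succ', ← Matrix.mul_assoc,
      ← Matrix.mul_assoc, Matrix.mul_assoc, Matrix.conjTranspose_mul_self_mul_eq_zero] at h
    rw [pow_succ', Matrix.mul_assoc, h]

/-! ### The graph polynomial and its reflection -/

/-- The polynomial `∏ (x_j - x_i)` over a set of ordered pairs, expanded by choosing one endpoint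
of each pair. -/
theorem prod_X_sub_X_eq_sum {V : Type*} [DecidableEq V] (E : Finset (V × V)) :
    (∏ e ∈ E, (X e.2 - X e.1) : MvPolynomial V ℝ) = ∑ T ∈ E.powerset,
      monomial (∑ e ∈ T, Finsupp.single e.2 1 + ∑ e ∈ E \ T, Finsupp.single e.1 1)
        ((-1) ^ #(E \ T)) := by
  simp_rw [sub_eq_add_neg]
  rw [Finset.prod_add]
  refine Finset.sum_congr rfl fun T _ => ?_
  rw [← one_mul ((-1 : ℝ) ^ _), ← monomial_mul, monomial_sum_one]
  congr 1
  rw [← Finset.prod_const, monomial_sum_prod]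
  refine Finset.prod_congr rfl fun e _ => ?_
  rw [X, ← map_neg]

/-- The vector counting, for each vertex, the incidences with pairs in `E`. -/
noncomputable def edgeDeg {V : Type*} (E : Finset (V × V)) : V →₀ ℕ :=
  ∑ e ∈ E, (Finsupp.single e.1 1 + Finsupp.single e.2 1)

/-- Swapping the chosen endpoint of every edge reflects the exponents of the graph polynomial
in the degree vector, at the cost of a global sign. -/
theorem coeff_reflect {V : Type*} [DecidableEq V] (E : Finset (V × V))
    (d d' m m' : V →₀ ℕ) (h : d + d' = edgeDeg E + (m + m')) :
    coeff d ((∏ e ∈ E, (X e.2 - X e.1) : MvPolynomial V ℝ) * monomial m 1) =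
      (-1) ^ #E * coeff d' ((∏ e ∈ E, (X e.2 - X e.1) : MvPolynomial V ℝ) * monomial m' 1) := by
  rw [prod_X_sub_X_eq_sum, Finset.sum_mul, Finset.sum_mul, coeff_sum, coeff_sum, Finset.mul_sum]
  refine Finset.sum_bij' (fun T _ => E \ T) (fun T _ => E \ T) ?_ ?_ ?_ ?_ ?_
  · simp
  · simp
  · intro T hT
    simpa using hT
  · intro T hT
    simpa using hT
  · intro T hT
    rw [Finset.mem_powerset] at hT
    have hss : E \ (E \ T) = T := by simpa using hT
    rw [monomial_mul, monomial_mul, coeff_monomial, coeff_monomial, hss]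
    have hsum : (∑ e ∈ T, Finsupp.single e.2 1 + ∑ e ∈ E \ T, Finsupp.single e.1 1 + m) +
        (∑ e ∈ E \ T, Finsupp.single e.2 1 + ∑ e ∈ T, Finsupp.single e.1 1 + m') = d + d' := by
      have h1 := Finset.sum_sdiff hT (f := fun e => Finsupp.single e.1 (1 : ℕ))
      have h2 := Finset.sum_sdiff hT (f := fun e => Finsupp.single e.2 (1 : ℕ))
      rw [h, edgeDeg, Finset.sum_add_distrib, ← h1, ← h2]
      abel
    have hiff : (∑ e ∈ T, Finsupp.single e.2 1 + ∑ e ∈ E \ T, Finsupp.single e.1 1 + m) = d ↔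
        (∑ e ∈ E \ T, Finsupp.single e.2 1 + ∑ e ∈ T, Finsupp.single e.1 1 + m') = d' := by
      constructor
      · intro hd
        rw [hd] at hsum
        exact add_left_cancel hsum
      · intro hd
        rw [hd] at hsum
        exact add_right_cancel hsum
    have hc : #E = #(E \ T) + #T := (Finset.card_sdiff_add_card_eq_card hT).symm
    by_cases hd : (∑ e ∈ T, Finsupp.single e.2 1 + ∑ e ∈ E \ T, Finsupp.single e.1 1 + m) = d
    · rw [if_pos hd, if_pos (hiff.1 hd), hc, pow_add]
      have : ((-1 : ℝ) ^ #T) * (-1) ^ #T = 1 := by rw [← mul_pow]; simp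
      linear_combination (-(-1 : ℝ) ^ #(E \ T)) * this
    · rw [if_neg hd, if_neg (fun h' => hd (hiff.2 h')), mul_zero]

theorem le_edgeDeg_of_coeff_ne_zero {V : Type*} [DecidableEq V] (E : Finset (V × V))
    (d : V →₀ ℕ) (h : coeff d (∏ e ∈ E, (X e.2 - X e.1) : MvPolynomial V ℝ) ≠ 0) :
    d ≤ edgeDeg E := by
  rw [prod_X_sub_X_eq_sum, coeff_sum] at h
  obtain ⟨T, hT, hne⟩ := Finset.exists_ne_zero_of_sum_ne_zero h
  rw [Finset.mem_powerset] at hT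
  rw [coeff_monomial] at hne
  split_ifs at hne with hd
  · rw [← hd, edgeDeg, Finset.sum_add_distrib, add_comm]
    exact add_le_add (Finset.sum_le_sum_of_subset Finset.sdiff_subset)
      (Finset.sum_le_sum_of_subset hT)
  · exact absurd rfl hne

theorem edgeDeg_eq_degree {V : Type*} [Fintype V] [DecidableEq V] {G : SimpleGraph V}
    [DecidableRel G.Adj] (D : GraphOrientation G) (v : V) : edgeDeg D.edges v = G.degree v := by
  have h1 : edgeDeg D.edges v = #{e ∈ D.edges | e.1 = v} + #{e ∈ D.edges | e.2 = v} := by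
    simp [edgeDeg, Finsupp.single_apply, Finset.sum_add_distrib]
  have h2 : G.neighborFinset v =
      ({e ∈ D.edges | e.1 = v}.image Prod.snd) ∪ ({e ∈ D.edges | e.2 = v}.image Prod.fst) := by
    ext w
    simp only [SimpleGraph.mem_neighborFinset, Finset.mem_union, Finset.mem_image,
      Finset.mem_filter, Prod.exists, exists_eq_right]
    constructor
    · intro hvw
      by_cases hm : (v, w) ∈ D.edges
      · exact Or.inl hm
      · refine Or.inr ⟨w, v, ⟨?_, rfl⟩, rfl⟩
        exact (D.mem_iff_not_swap_mem w v hvw.symm).2 hm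
    · rintro (ha | ⟨a, b, ⟨ha, rfl⟩, rfl⟩)
      · exact D.adj_of_mem _ ha
      · exact (D.adj_of_mem _ ha).symm
  rw [h1, ← SimpleGraph.card_neighborFinset_eq_degree, h2, Finset.card_union_of_disjoint,
    Finset.card_image_of_injOn, Finset.card_image_of_injOn]
  · rintro ⟨a, b⟩ ha ⟨a', b'⟩ hb hab
    simp_all
  · rintro ⟨a, b⟩ ha ⟨a', b'⟩ hb hab
    simp_all
  · rw [Finset.disjoint_left]
    intro w hw hw'
    simp only [Finset.mem_image, Finset.mem_filter, Prod.exists, exists_eq_right] at hw hw'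
    obtain ⟨b, c, ⟨hb, rfl⟩, rfl⟩ := hw'
    exact (D.mem_iff_not_swap_mem _ _ (D.adj_of_mem _ hw)).1 hw hb

theorem isHomogeneous_prod_X_sub_X {V ι : Type*} (E : Finset ι) (f g : ι → V) :
    (∏ e ∈ E, (X (f e) - X (g e)) : MvPolynomial V ℝ).IsHomogeneous #E := by
  have := IsHomogeneous.prod E (fun e => (X (f e) - X (g e) : MvPolynomial V ℝ)) (fun _ => 1)
    fun e _ => (isHomogeneous_X ℝ (f e)).sub (isHomogeneous_X ℝ (g e))
  simpa using this

/-! ### Cycle edges -/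

/-- Number of vertices at which a Boolean state is `true`. -/
def wt {V : Type*} [Fintype V] (s : V → Bool) : ℕ := ∑ v, (s v).toNat

/-- Exponent vector contributed to a layer of `G □ C` by the cycle edges when the edges entering
it are in state `s` and those leaving it are in state `s'`; state `true` at an edge means that its
far endpoint is the chosen one. -/
noncomputable def expo {V : Type*} [Fintype V] (s s' : V → Bool) : V →₀ ℕ :=
  Finsupp.equivFunOnFinite.symm fun v => (s v).toNat + (!s' v).toNat

theorem expo_add_swap {V : Type*} [Fintype V] (s s' : V → Bool) :
    expo s s' + expo s' s = Finsupp.equivFunOnFinite.symm fun _ => 2 := by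
  ext v
  simp only [expo, Finsupp.add_apply, Finsupp.equivFunOnFinite_symm_apply_apply]
  cases s v <;> cases s' v <;> rfl

theorem degree_expo {V : Type*} [Fintype V] (s s' : V → Bool) :
    (expo s s').degree + wt s' = wt s + Fintype.card V := by
  rw [Finsupp.degree_eq_sum, wt, wt, ← Finset.card_univ, Finset.card_eq_sum_ones,
    ← Finset.sum_add_distrib, ← Finset.sum_add_distrib]
  refine Finset.sum_congr rfl fun v _ => ?_
  simp only [expo, Finsupp.equivFunOnFinite_symm_apply_apply]
  cases s v <;> cases s' v <;> rfl

theorem monomial_expo {V : Type*} [Fintype V] (s s' : V → Bool) :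
    (monomial (expo s s') ((-1) ^ wt s) : MvPolynomial V ℝ) =
      ∏ v, ((if s v then -X v else 1) * (if s' v then 1 else X v)) := by
  rw [monomial_eq, Finsupp.prod_fintype _ _ (fun _ => pow_zero _), wt, ← Finset.prod_pow_eq_pow_sum,
    map_prod, ← Finset.prod_mul_distrib]
  refine Finset.prod_congr rfl fun v _ => ?_
  simp only [expo, Finsupp.equivFunOnFinite_symm_apply_apply]
  cases s v <;> cases s' v <;> simp [pow_two]

/-- The product over all cycle edges of `V × C_{m+1}`, expanded over the choices of endpoints and
regrouped layer by layer. -/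
theorem cycle_expand {V : Type*} [Fintype V] [DecidableEq V] (m : ℕ) :
    (∏ u : Fin (m + 1), ∏ v : V, (X (v, u - 1) - X (v, u)) : MvPolynomial (V × Fin (m + 1)) ℝ) =
      ∑ s : Fin (m + 1) → V → Bool, ∏ u, rename (fun v => (v, u))
        (monomial (expo (s u) (s (u + 1))) ((-1) ^ wt (s u))) := by
  have h1 : ∀ (u : Fin (m + 1)) (v : V),
      (X (v, u - 1) - X (v, u) : MvPolynomial (V × Fin (m + 1)) ℝ) =
        ∑ b : Bool, if b then -X (v, u) else X (v, u - 1) := by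
    intro u v
    simp
    ring
  simp_rw [h1, Finset.prod_univ_sum, Fintype.piFinset_univ, monomial_expo]
  refine Finset.sum_congr rfl fun s _ => ?_
  have h2 : ∀ (u : Fin (m + 1)) (v : V),
      (if s u v then -X (v, u) else X (v, u - 1) : MvPolynomial (V × Fin (m + 1)) ℝ) =
        (if s u v then -X (v, u) else 1) * (if s u v then 1 else X (v, u - 1)) := by
    intro u v
    cases s u v <;> simp
  simp_rw [h2, Finset.prod_mul_distrib]
  rw [← Equiv.prod_comp (Equiv.addRight (1 : Fin (m + 1)))
    fun u => ∏ v, (if s u v then 1 else X (v, u - 1) : MvPolynomial (V × Fin (m + 1)) ℝ)]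
  simp only [Equiv.coe_addRight, add_sub_cancel_right]
  rw [← Finset.prod_mul_distrib]
  refine Finset.prod_congr rfl fun u _ => ?_
  rw [map_mul, map_prod, map_prod]
  congr 1 <;> refine Finset.prod_congr rfl fun v _ => ?_ <;> split_ifs <;> simp

/-! ### Transfer matrices -/

/-- Transfer matrix of a layer: the coefficient of `x^d` when the cycle edges on its two sides are
in prescribed states. -/
noncomputable def transfer {V : Type*} [Fintype V] (F : MvPolynomial V ℝ) (d : V →₀ ℕ) :
    Matrix (V → Bool) (V → Bool) ℝ :=
  Matrix.of fun s s' => coeff d (F * monomial (expo s s') ((-1) ^ wt s))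

theorem transfer_apply {V : Type*} [Fintype V] (F : MvPolynomial V ℝ) (d : V →₀ ℕ)
    (s s' : V → Bool) :
    transfer F d s s' = (-1) ^ wt s * coeff d (F * monomial (expo s s') 1) := by
  have : (monomial (expo s s') ((-1) ^ wt s) : MvPolynomial V ℝ) =
      C ((-1) ^ wt s) * monomial (expo s s') 1 := by rw [C_mul_monomial, mul_one]
  rw [transfer, Matrix.of_apply, this, mul_left_comm, coeff_C_mul]

/-- Layers with reflected exponents have transposed transfer matrices, up to a global sign; the
sign is constant because homogeneity fixes the parity of `wt s + wt s'` on nonzero entries. -/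
theorem transfer_reflect {V : Type*} [Fintype V] [DecidableEq V] (E : Finset (V × V))
    (d d' : V →₀ ℕ) (h : d + d' = edgeDeg E + Finsupp.equivFunOnFinite.symm fun _ => 2) :
    transfer (∏ e ∈ E, (X e.2 - X e.1)) d' =
      ((-1 : ℝ) ^ (d.degree + Fintype.card V)) •
        (transfer (∏ e ∈ E, (X e.2 - X e.1)) d).conjTranspose := by
  ext s' s
  rw [Matrix.smul_apply, Matrix.conjTranspose_apply, transfer_apply, transfer_apply, star_trivial,
    coeff_reflect E d' d (expo s' s) (expo s s') (by rw [expo_add_swap, add_comm, h]), smul_eq_mul]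
  by_cases h0 : coeff d ((∏ e ∈ E, (X e.2 - X e.1) : MvPolynomial V ℝ) *
      monomial (expo s s') 1) = 0
  · simp [h0]
  have hdeg : d.degree = #E + (expo s s').degree := by
    by_contra hd
    exact h0 (((isHomogeneous_prod_X_sub_X E Prod.snd Prod.fst).mul
      (isHomogeneous_monomial 1 rfl)).coeff_eq_zero hd)
  have hs := degree_expo s s'
  rw [← mul_assoc, ← mul_assoc, ← pow_add, ← pow_add]
  congr 1
  apply neg_one_pow_congr
  rw [Nat.even_iff, Nat.even_iff]
  omega

/-- If `[x^τ] F ≠ 0` and `te` exceeds `τ` by `0`, `1` or `2` at each vertex, the transfer matrix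
for `te` has a nonzero entry. -/
theorem transfer_ne_zero {V : Type*} [Fintype V] (F : MvPolynomial V ℝ) (τ te : V →₀ ℕ)
    (hτ : coeff τ F ≠ 0) (hte : ∀ v, τ v ≤ te v ∧ te v ≤ τ v + 2) : transfer F te ≠ 0 := by
  intro h0
  have h := congrFun (congrFun h0 fun v => decide (te v = τ v + 2)) fun v => decide (te v = τ v)
  have hexp : te = τ + expo (fun v => decide (te v = τ v + 2)) (fun v => decide (te v = τ v)) := by
    ext v
    simp only [expo, Finsupp.add_apply, Finsupp.equivFunOnFinite_symm_apply_apply]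
    obtain ⟨h1, h2⟩ := hte v
    obtain h3 | h3 | h3 : te v = τ v ∨ te v = τ v + 1 ∨ te v = τ v + 2 := by omega
    all_goals simp [h3]
  rw [transfer_apply, Matrix.zero_apply] at h
  have h' := (mul_eq_zero.1 h).resolve_left (pow_ne_zero _ (by norm_num))
  generalize expo (fun v => decide (te v = τ v + 2)) (fun v => decide (te v = τ v)) = e at h' hexp
  rw [hexp, coeff_mul_monomial, mul_one] at h'
  exact hτ h'

/-! ### The graph polynomial of the product with a cycle -/

/-- The graph polynomial of `G □ C_{m+1}`, for `G` with set of oriented edges `E`. -/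
noncomputable def boxPoly {V : Type*} [Fintype V] (E : Finset (V × V)) (m : ℕ) :
    MvPolynomial (V × Fin (m + 1)) ℝ :=
  (∏ u, rename (fun v => (v, u)) (∏ e ∈ E, (X e.2 - X e.1))) *
    ∏ u : Fin (m + 1), ∏ v : V, (X (v, u - 1) - X (v, u))

/-- The coefficient is, up to sign, the trace of a power of `T * Tᴴ`, with `T ≠ 0` the transfer
matrix of an even layer. -/
theorem coeff_boxPoly_ne_zero {V : Type*} [Fintype V] [DecidableEq V] (E : Finset (V × V))
    (τ te td : V →₀ ℕ)
    (hτ : coeff τ (∏ e ∈ E, (X e.2 - X e.1) : MvPolynomial V ℝ) ≠ 0)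
    (hte : ∀ v, τ v ≤ te v ∧ te v ≤ τ v + 2)
    (h : te + td = edgeDeg E + Finsupp.equivFunOnFinite.symm fun _ => 2)
    (m k : ℕ) (hm : m + 1 = 2 * k) (t : V × Fin (m + 1) →₀ ℕ)
    (ht : ∀ v (u : Fin (m + 1)), t (v, u) = if Even u.val then te v else td v) :
    coeff t (boxPoly E m) ≠ 0 := by
  obtain ⟨k, rfl⟩ : ∃ j, k = j + 1 := ⟨k - 1, by omega⟩
  set F : MvPolynomial V ℝ := ∏ e ∈ E, (X e.2 - X e.1) with hF
  set T := transfer F te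
  have hcoeff : coeff t (boxPoly E m) =
      (seqProd (fun u => if Even u then T else transfer F td) (m + 1)).trace := by
    rw [trace_seqProd, boxPoly, cycle_expand, Finset.mul_sum, coeff_sum]
    refine Finset.sum_congr rfl fun s _ => ?_
    rw [← Finset.prod_mul_distrib]
    simp_rw [← map_mul]
    rw [coeff_prod_rename _ t (fun u => if Even u.val then te else td)
      (fun v u => by rw [ht]; split_ifs <;> rfl)]
    refine Finset.prod_congr rfl fun u _ => ?_
    split_ifs <;> rfl
  rw [hcoeff, hm, seqProd_alternating, transfer_reflect E te td h, Matrix.mul_smul, smul_pow,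
    Matrix.trace_smul]
  exact smul_ne_zero (pow_ne_zero _ (pow_ne_zero _ (by norm_num)))
    (trace_pow_ne_zero T (transfer_ne_zero F τ te hτ hte) k)

theorem boxPoly_isHomogeneous {V : Type*} [Fintype V] (E : Finset (V × V)) (m : ℕ) :
    ∃ N, (boxPoly E m).IsHomogeneous N :=
  ⟨_, (IsHomogeneous.prod _ _ (fun _ => #E) fun _ _ =>
      (isHomogeneous_prod_X_sub_X E Prod.snd Prod.fst).rename_isHomogeneous).mul
    (IsHomogeneous.prod _ _ (fun _ => _) fun u _ =>
      isHomogeneous_prod_X_sub_X univ (fun v => (v, u - 1)) fun v => (v, u))⟩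

/-- A point where the graph polynomial does not vanish is a proper coloring. -/
theorem ne_of_eval_boxPoly_ne_zero {V : Type*} [Fintype V] {G : SimpleGraph V}
    (D : GraphOrientation G) (m : ℕ) (hm : 1 ≤ m) (c : V × Fin (m + 1) → ℝ)
    (hc : eval c (boxPoly D.edges m) ≠ 0) (a b : V × Fin (m + 1))
    (hab : (G.boxProd (SimpleGraph.cycleGraph (m + 1))).Adj a b) : c a ≠ c b := by
  rw [boxPoly, map_mul, map_prod, map_prod] at hc
  have hG := left_ne_zero_of_mul hc
  have hC := right_ne_zero_of_mul hc
  rw [Finset.prod_ne_zero_iff] at hG hC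
  have hGe : ∀ x y u, (x, y) ∈ D.edges → c (x, u) ≠ c (y, u) := by
    intro x y u hxy heq
    have := hG u (Finset.mem_univ u)
    rw [map_prod, map_prod, Finset.prod_ne_zero_iff] at this
    apply this _ hxy
    simp [heq]
  have hCe : ∀ v u u', u - u' = 1 → c (v, u) ≠ c (v, u') := by
    intro v u u' hu heq
    have := hC u (Finset.mem_univ u)
    rw [map_prod, Finset.prod_ne_zero_iff] at this
    apply this v (Finset.mem_univ v)
    have : u - 1 = u' := by rw [← hu]; abel
    simp [this, heq]
  obtain ⟨x, u⟩ := a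
  obtain ⟨y, w⟩ := b
  rw [SimpleGraph.boxProd_adj] at hab
  rcases hab with ⟨hxy, huw⟩ | ⟨huw, hxy⟩
  · obtain rfl : u = w := huw
    by_cases hm' : (x, y) ∈ D.edges
    · exact hGe x y u hm'
    · exact (hGe y x u ((D.mem_iff_not_swap_mem y x (SimpleGraph.Adj.symm hxy)).2 hm')).symm
  · obtain rfl : x = y := hxy
    obtain ⟨m, rfl⟩ : ∃ j, m = j + 1 := ⟨m - 1, by omega⟩
    rcases SimpleGraph.cycleGraph_adj.1 huw with h1 | h1
    · exact hCe x u w h1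
    · exact (hCe x w u h1).symm

/-- Let `τ` be an exponent vector with `[x^τ] F_G ≠ 0`, let
`A₁ = {i : 2τᵢ ≤ deg(vᵢ) - 2}`, `B₁ = {i : 2τᵢ ≥ deg(vᵢ) + 2}`, and choose
`A₃ ⊆ A₁`, `B₃ ⊆ B₁` with `|A₃| = max(0, |A₁| - |B₁|)`, `|B₃| = max(0, |B₁| - |A₁|)`.
With `f(vᵢ) = max(τᵢ, deg(vᵢ) - τᵢ) + 1` for `i ∈ (A₁ ∪ B₁) \ (A₃ ∪ B₃)` and
`f(vᵢ) = max(τᵢ, deg(vᵢ) - τᵢ) + 2` otherwise, the graph `G □ C_{2k}` is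
`f`-choosable (lists of size `f(v)` at every vertex `(v, u)`). -/
theorem stmt12 (n : ℕ) (G : SimpleGraph (Fin n)) [DecidableRel G.Adj]
    (D : GraphOrientation G) (τ : Fin n → ℕ)
    (hne : MvPolynomial.coeff (Finsupp.equivFunOnFinite.symm τ) (graphPoly D) ≠ 0)
    (A1 B1 A3 B3 : Finset (Fin n))
    (hA1 : A1 = Finset.univ.filter fun i => 2 * τ i + 2 ≤ G.degree i)
    (hB1 : B1 = Finset.univ.filter fun i => G.degree i + 2 ≤ 2 * τ i)
    (hA3 : A3 ⊆ A1) (hA3card : A3.card = A1.card - B1.card)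
    (hB3 : B3 ⊆ B1) (hB3card : B3.card = B1.card - A1.card)
    (k : ℕ) (hk : 2 ≤ k) :
    Choosable (G.boxProd (SimpleGraph.cycleGraph (2 * k)))
      (fun w => max (τ w.1) (G.degree w.1 - τ w.1) +
        if w.1 ∈ (A1 ∪ B1) \ (A3 ∪ B3) then 1 else 2) := by
  obtain ⟨m, hm⟩ : ∃ m, m + 1 = 2 * k := ⟨2 * k - 1, by omega⟩
  rw [← hm]
  intro A hA
  have hτle : ∀ v, τ v ≤ G.degree v := fun v => by
    rw [← edgeDeg_eq_degree D]
    exact le_edgeDeg_of_coeff_ne_zero D.edges _ hne v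
  -- Exponents on even layers; odd layers get `deg + 2 - te`. On `A1` the slack `2 τ + 2 ≤ deg` lets
  -- an even layer take both units from the cycle edges, on `B1` an odd layer does.
  set te : Fin n → ℕ := fun v =>
    if v ∈ A1 then τ v + 2 else if v ∈ B1 then τ v else τ v + 1 with hte
  have hte1 : ∀ v, τ v ≤ te v ∧ te v ≤ τ v + 2 := fun v => by
    simp only [hte]
    split_ifs <;> omega
  have hbound : ∀ v, te v < max (τ v) (G.degree v - τ v) +
        (if v ∈ (A1 ∪ B1) \ (A3 ∪ B3) then 1 else 2) ∧
      G.degree v + 2 - te v < max (τ v) (G.degree v - τ v) +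
        (if v ∈ (A1 ∪ B1) \ (A3 ∪ B3) then 1 else 2) := fun v => by
    have hv := hτle v
    have hAv : v ∈ A1 ↔ 2 * τ v + 2 ≤ G.degree v := by simp [hA1]
    have hBv : v ∈ B1 ↔ G.degree v + 2 ≤ 2 * τ v := by simp [hB1]
    have hor : v ∈ (A1 ∪ B1) \ (A3 ∪ B3) → v ∈ A1 ∨ v ∈ B1 := fun h =>
      Finset.mem_union.1 (Finset.mem_sdiff.1 h).1
    simp only [hte]
    by_cases hA' : v ∈ A1
    · have := hAv.1 hA'
      rw [if_pos hA']
      split_ifs <;> omega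
    · by_cases hB' : v ∈ B1
      · have := hBv.1 hB'
        rw [if_neg hA', if_pos hB']
        split_ifs <;> omega
      · rw [if_neg hA', if_neg hB', if_neg fun h => (hor h).elim hA' hB']
        omega
  set t : Fin n × Fin (m + 1) →₀ ℕ := Finsupp.equivFunOnFinite.symm fun w =>
    if Even w.2.val then te w.1 else G.degree w.1 + 2 - te w.1 with ht
  have hcoeff : coeff t (boxPoly D.edges m) ≠ 0 := by
    refine coeff_boxPoly_ne_zero D.edges _ (Finsupp.equivFunOnFinite.symm te)
      (Finsupp.equivFunOnFinite.symm fun v => G.degree v + 2 - te v) hne hte1 ?_ m k hm t ?_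
    · ext v
      have h1 := hte1 v
      have h2 := hτle v
      simp only [Finsupp.add_apply, Finsupp.equivFunOnFinite_symm_apply_apply,
        edgeDeg_eq_degree D]
      omega
    · intro v u
      rfl
  obtain ⟨N, hN⟩ := boxPoly_isHomogeneous D.edges m
  have hdeg : (boxPoly D.edges m).totalDegree = t.degree := by
    rw [hN.totalDegree (fun h0 => hcoeff (by rw [h0, coeff_zero]))]
    by_contra hd
    exact hcoeff (hN.coeff_eq_zero (Ne.symm hd))
  obtain ⟨c, hcA, hc⟩ := combinatorial_nullstellensatz_exists_eval_nonzero _ t hcoeff hdeg A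
    (fun w => by
      refine lt_of_lt_of_le ?_ (hA w)
      simp only [ht, Finsupp.equivFunOnFinite_symm_apply_apply]
      by_cases hw : Even w.2.val
      · rw [if_pos hw]
        exact (hbound w.1).1
      · rw [if_neg hw]
        exact (hbound w.1).2)
  exact ⟨c, hcA, ne_of_eval_boxPoly_ne_zero D m (by omega) c hc⟩
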